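/- arXiv:2209.08658 — 5 statements merged into one kernel-verified Lean document; each statement's English description precedes it below -/
import Mathlib

section
/- Let C be an abelian category and let ω, S be classes of objects of C such that ω is closed under extensions and ω∩S is a relative generator in ω. Let M be an object of C admitting an ω-resolution ⋯→W₁→W₀→M→0 with cycles Z_{j+1} := ker(W_j→W_{j-1}) (and Z₁ := ker(W₀→M)). Then there exist objects X_j (j≥0) with X₀ = M and, for every j≥0, short exact sequences 0→G_j→X_{j+1}→Z_{j+1}→0 and 0→X_{j+1}→F_j→X_j→0 with F_j ∈ ω∩S and G_j ∈ ω. -/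
/-!
The objects `X j` are built recursively, the invariant being a short exact sequence
`0 → Z (j + 1) → E → X j → 0` with `E ∈ ω`; for `j = 0` take `E = W 0`.

Given such a sequence, choose `0 → G → F → E → 0` with `F ∈ ω ∩ S` and `G ∈ ω`, and let `X (j + 1)`
be the pullback of `F → E` along `Z (j + 1) → E`. It is an extension of `Z (j + 1)` by `G`
(`isSES_pullback`) and it is also the kernel of the composite `F → E → X j` (`exists_isSES_isSES`).
To restore the invariant, let `E'` be the pullback of `W (j + 1) → Z (j + 1) ← X (j + 1)`.
It is an extension of `W (j + 1)` by `G`, so it lies in `ω`, and it is an extension of `X (j + 1)`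
by `Z (j + 2)`.
-/


open CategoryTheory

universe w v u

variable {C : Type u} [Category.{v} C] [Abelian C]

/-- `IsSES A B X` : there is a short exact sequence `0 → A → B → X → 0` in `C`. -/
def IsSES (A B X : C) : Prop :=
  ∃ (f : A ⟶ B) (g : B ⟶ X) (zero : f ≫ g = 0),
    (ShortComplex.mk f g zero).ShortExact

/-- `P` is closed under extensions. -/
def ClosedUnderExtensions (P : C → Prop) : Prop :=
  ∀ ⦃A B X : C⦄, IsSES A B X → P A → P X → P B

/-- `P` is closed under cones. -/
def ClosedUnderCones (P : C → Prop) : Prop :=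
  ∀ ⦃A B X : C⦄, IsSES A B X → P A → P B → P X

/-- `P` is closed under cocones. -/
def ClosedUnderCocones (P : C → Prop) : Prop :=
  ∀ ⦃A B X : C⦄, IsSES A B X → P B → P X → P A

/-- `P` is closed under isomorphisms. -/
def ClosedUnderIsos (P : C → Prop) : Prop :=
  ∀ ⦃X Y : C⦄, (X ≅ Y) → P X → P Y

/-- `P` is closed under direct summands. -/
def ClosedUnderSummands (P : C → Prop) : Prop :=
  ∀ ⦃X Y : C⦄, P X → (∃ (i : Y ⟶ X) (r : X ⟶ Y), i ≫ r = 𝟙 Y) → P Y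

/-- `HasResLength P n M` : there is an exact sequence `0 → W_n → ⋯ → W_0 → M → 0`
with all `W_i` in `P`. -/
inductive HasResLength (P : C → Prop) : ℕ → C → Prop
  | of_iso {M W : C} (hW : P W) (e : M ≅ W) : HasResLength P 0 M
  | step {K W M : C} {n : ℕ} (hW : P W) (h : IsSES K W M)
      (hK : HasResLength P n K) : HasResLength P (n + 1) M

/-- `P^∧` : the class of objects admitting a finite `P`-resolution. -/
def ResClass (P : C → Prop) : C → Prop := fun M => ∃ n, HasResLength P n M

/-- The resolution dimension `resdim_P(M) ∈ ℕ∞`. -/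
noncomputable def resDim (P : C → Prop) (M : C) : ℕ∞ :=
  sInf {n : ℕ∞ | ∃ m : ℕ, n = (m : ℕ∞) ∧ HasResLength P m M}

/-- `HasCoresLength P n M` : there is an exact sequence `0 → M → W_0 → ⋯ → W_n → 0`
with all `W_i` in `P`. -/
inductive HasCoresLength (P : C → Prop) : ℕ → C → Prop
  | of_iso {M W : C} (hW : P W) (e : M ≅ W) : HasCoresLength P 0 M
  | step {M W K : C} {n : ℕ} (hW : P W) (h : IsSES M W K)
      (hK : HasCoresLength P n K) : HasCoresLength P (n + 1) M

/-- `ω ∩ S` is a relative generator in `ω` : every `W ∈ ω` fits in a short exact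
sequence `0 → W' → F → W → 0` with `F ∈ ω ∩ S` and `W' ∈ ω`. -/
def RelGenerator (ω S : C → Prop) : Prop :=
  ∀ ⦃W : C⦄, ω W → ∃ (W' F : C), ω W' ∧ (ω F ∧ S F) ∧ IsSES W' F W

/-- `P` is left thick : closed under extensions, direct summands and cocones. -/
def LeftThick (P : C → Prop) : Prop :=
  ClosedUnderExtensions P ∧ ClosedUnderSummands P ∧ ClosedUnderCocones P

/-- `P` is right thick : closed under extensions, direct summands and cones. -/
def RightThick (P : C → Prop) : Prop :=
  ClosedUnderExtensions P ∧ ClosedUnderSummands P ∧ ClosedUnderCones P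

/-- The smallest thick class (closed under extensions, direct summands, cones and
cocones) containing `P`. -/
inductive ThickClosure (P : C → Prop) : C → Prop
  | of {M : C} (h : P M) : ThickClosure P M
  | ext {A B X : C} (h : IsSES A B X) (hA : ThickClosure P A) (hX : ThickClosure P X) :
      ThickClosure P B
  | cone {A B X : C} (h : IsSES A B X) (hA : ThickClosure P A) (hB : ThickClosure P B) :
      ThickClosure P X
  | cocone {A B X : C} (h : IsSES A B X) (hB : ThickClosure P B) (hX : ThickClosure P X) :
      ThickClosure P A
  | summand {X Y : C} (hX : ThickClosure P X) (i : Y ⟶ X) (r : X ⟶ Y) (hir : i ≫ r = 𝟙 Y) :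
      ThickClosure P Y

section WithExt

variable [HasExt.{w} C]

/-- `Ext^i(A, B) = 0` for all `A ∈ P`, `B ∈ Q` and all `i ≥ 1`. -/
def ExtVanish (P Q : C → Prop) : Prop :=
  ∀ ⦃A B : C⦄, P A → Q B → ∀ i : ℕ, 1 ≤ i → Subsingleton (Abelian.Ext A B i)

/-- `(X, ω)` is a left Frobenius pair in `C`. -/
def IsLeftFrobenius (X ω : C → Prop) : Prop :=
  LeftThick X ∧ (∀ ⦃W : C⦄, ω W → X W) ∧ ClosedUnderSummands ω ∧
    ExtVanish X ω ∧
    (∀ ⦃A : C⦄, X A → ∃ (W A' : C), ω W ∧ X A' ∧ IsSES A W A')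

/-- `(X, ω)` is a left Frobenius pair cut on `S`. -/
def IsLeftFrobeniusCut (X ω S : C → Prop) : Prop :=
  LeftThick X ∧
  IsLeftFrobenius (fun M => X M ∧ S M) (fun M => ω M ∧ S M) ∧
  (ExtVanish (fun M => ω M ∧ S M) ω ∧ RelGenerator ω S) ∧
  (ClosedUnderExtensions ω ∧ ClosedUnderSummands ω)

/-- `(A, B)` is a left weak AB context cut on `S`. -/
def IsLeftWeakABCut (A B S : C → Prop) : Prop :=
  IsLeftFrobeniusCut A (fun M => A M ∧ B M) S ∧
  RightThick (fun M => B M ∧ S M) ∧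
  (∀ ⦃M : C⦄, B M → S M → ResClass (fun N => A N ∧ S N) M)

/-- `(U, V)` is a left 1-cotorsion pair cut on `T`. -/
def IsLeft1CotorsionCut (U V T : C → Prop) : Prop :=
  ClosedUnderSummands U ∧
  (∀ ⦃A B : C⦄, U A → T A → V B → Subsingleton (Abelian.Ext A B 1)) ∧
  (∀ ⦃t : C⦄, T t → ∃ (K A : C), U A ∧ (∃ V' : C, V V' ∧ Nonempty (K ≅ V')) ∧ IsSES K A t)

/-- `(U, V)` is a right 1-cotorsion pair cut on `T`. -/
def IsRight1CotorsionCut (U V T : C → Prop) : Prop :=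
  ClosedUnderSummands V ∧
  (∀ ⦃A B : C⦄, U A → V B → T B → Subsingleton (Abelian.Ext A B 1)) ∧
  (∀ ⦃t : C⦄, T t → ∃ (B W : C), V B ∧ (∃ U' : C, U U' ∧ Nonempty (W ≅ U')) ∧ IsSES t B W)

/-- `(U, V)` is a 1-cotorsion pair cut on `T`. -/
def Is1CotorsionCut (U V T : C → Prop) : Prop :=
  IsLeft1CotorsionCut U V T ∧ IsRight1CotorsionCut U V T

/-- `(A, B)` is a left `n`-cotorsion pair cut on `S`. -/
def IsLeftNCotorsionCut (n : ℕ) (A B S : C → Prop) : Prop :=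
  ClosedUnderSummands A ∧
  (∀ ⦃X Y : C⦄, A X → S X → B Y → ∀ i : ℕ, 1 ≤ i → i ≤ n → Subsingleton (Abelian.Ext X Y i)) ∧
  (∀ ⦃s : C⦄, S s → ∃ (K X : C), A X ∧ (∃ m : ℕ, m ≤ n - 1 ∧ HasResLength B m K) ∧ IsSES K X s)

/-- `(A, B)` is a right `n`-cotorsion pair cut on `S`. -/
def IsRightNCotorsionCut (n : ℕ) (A B S : C → Prop) : Prop :=
  ClosedUnderSummands B ∧
  (∀ ⦃X Y : C⦄, A X → B Y → S Y → ∀ i : ℕ, 1 ≤ i → i ≤ n → Subsingleton (Abelian.Ext X Y i)) ∧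
  (∀ ⦃s : C⦄, S s → ∃ (Y W : C), B Y ∧ (∃ m : ℕ, m ≤ n - 1 ∧ HasCoresLength A m W) ∧ IsSES s Y W)

/-- `(F, G)` is a complete cotorsion pair in `T`. -/
def IsCompleteCotorsionPairIn (T F G : C → Prop) : Prop :=
  (∀ ⦃M : C⦄, F M → T M) ∧ (∀ ⦃M : C⦄, G M → T M) ∧
  ClosedUnderSummands F ∧ ClosedUnderSummands G ∧
  (∀ ⦃A B : C⦄, F A → G B → Subsingleton (Abelian.Ext A B 1)) ∧
  (∀ ⦃M : C⦄, T M →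
    (∃ G₁ F₁ : C, G G₁ ∧ F F₁ ∧ IsSES G₁ F₁ M) ∧
    (∃ G₂ F₂ : C, G G₂ ∧ F F₂ ∧ IsSES M G₂ F₂))

end WithExt


open Limits

/-- Pulling back a short exact sequence along a morphism to its last term gives a short exact
sequence with the same first term. -/
lemma isSES_pullback {A B X Y : C} {f : A ⟶ B} {g : B ⟶ X} {zero : f ≫ g = 0}
    (h : (ShortComplex.mk f g zero).ShortExact) (d : Y ⟶ X) :
    IsSES A (pullback g d) Y := by
  have hf : Mono f := h.mono_f
  have hg : Epi g := h.epi_g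
  let l : A ⟶ pullback g d := pullback.lift f 0 (by rw [zero, zero_comp])
  have hl : l ≫ pullback.fst g d = f := pullback.lift_fst _ _ _
  have w : l ≫ pullback.snd g d = 0 := pullback.lift_snd _ _ _
  have hm : Mono l := mono_of_mono_fac hl
  refine ⟨l, _, w, ShortComplex.ShortExact.mk' (ShortComplex.exact_of_f_is_kernel _ ?_) hm
    (inferInstanceAs (Epi (pullback.snd g d)))⟩
  refine KernelFork.IsLimit.ofι' _ _ fun {T} k hk => ?_
  have hk' : (k ≫ pullback.fst g d) ≫ g = 0 := by
    rw [Category.assoc, pullback.condition, ← Category.assoc, hk, zero_comp]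
  refine ⟨h.exact.lift _ hk', ?_⟩
  apply pullback.hom_ext
  · rw [Category.assoc, hl]
    exact h.exact.lift_f _ hk'
  · rw [Category.assoc, w, comp_zero]
    exact hk.symm

/-- For `Y ⊆ E` and an epimorphism `F ⟶ E` with kernel `G`, the preimage `K` of `Y` in `F` is an
extension of `Y` by `G` and is the kernel of `F ⟶ E ⟶ X`, where `X` is the quotient of `E`
by `Y`. -/
lemma exists_isSES_isSES {G F E Y X : C} (h₁ : IsSES G F E) (h₂ : IsSES Y E X) :
    ∃ K : C, IsSES G K Y ∧ IsSES K F X := by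
  obtain ⟨a, b, hab, hs⟩ := h₁
  obtain ⟨i, p, hip, ht⟩ := h₂
  have hb : Epi b := hs.epi_g
  have hp : Epi p := ht.epi_g
  have hi : Mono i := ht.mono_f
  have w : pullback.fst b i ≫ (b ≫ p) = 0 := by
    rw [← Category.assoc, pullback.condition, Category.assoc, hip, comp_zero]
  refine ⟨pullback b i, isSES_pullback hs i, pullback.fst b i, b ≫ p, w,
    ShortComplex.ShortExact.mk' (ShortComplex.exact_of_f_is_kernel _ ?_)
      inferInstance (epi_comp b p)⟩
  refine KernelFork.IsLimit.ofι' _ _ fun {T} k hk => ?_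
  have hk' : (k ≫ b) ≫ p = 0 := by simpa using hk
  exact ⟨pullback.lift k (ht.exact.lift _ hk') (ht.exact.lift_f _ hk').symm,
    pullback.lift_fst _ _ _⟩

/-- If `Y` is a common quotient of `K` and `W`, then the pullback of `K ⟶ Y ⟵ W` is an extension in
two ways. -/
lemma exists_isSES_isSES_of_common_quotient {G K Y Y' W : C} (h₁ : IsSES G K Y)
    (h₂ : IsSES Y' W Y) : ∃ P : C, IsSES G P W ∧ IsSES Y' P K := by
  obtain ⟨a, b, hab, hs⟩ := h₁
  obtain ⟨i, p, hip, ht⟩ := h₂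
  refine ⟨pullback b p, isSES_pullback hs p, ?_⟩
  obtain ⟨f, g, w, h⟩ := isSES_pullback ht b
  let e := pullbackSymmetry p b
  have w' : (f ≫ e.hom) ≫ (e.inv ≫ g) = 0 := by simpa using w
  exact ⟨f ≫ e.hom, e.inv ≫ g, w', ShortComplex.shortExact_of_iso
    (S₁ := ShortComplex.mk f g w)
    (ShortComplex.isoMk (Iso.refl _) e (Iso.refl _) (by simp) (by simp)) h⟩

theorem stmt_0 (ω S : C → Prop)
    (hωext : ClosedUnderExtensions ω) (hgen : RelGenerator ω S)
    (M : C) (W Z : ℕ → C)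
    (hW : ∀ n, ω (W n)) (hZ0 : Z 0 = M)
    (hres : ∀ n, IsSES (Z (n + 1)) (W n) (Z n)) :
    ∃ X : ℕ → C, X 0 = M ∧
      ∀ j : ℕ, ∃ (G F : C), ω G ∧ (ω F ∧ S F) ∧
        IsSES G (X (j + 1)) (Z (j + 1)) ∧ IsSES (X (j + 1)) F (X j) := by
  have step : ∀ (j : ℕ) (X : {X : C // ∃ E, ω E ∧ IsSES (Z (j + 1)) E X}),
      ∃ X' : {X' : C // ∃ E, ω E ∧ IsSES (Z (j + 1 + 1)) E X'},
        ∃ (G F : C), ω G ∧ (ω F ∧ S F) ∧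
          IsSES G X'.1 (Z (j + 1)) ∧ IsSES X'.1 F X.1 := by
    rintro j ⟨X, E, hE, hX⟩
    obtain ⟨G, F, hG, hF, hGFE⟩ := hgen hE
    obtain ⟨K, hK₁, hK₂⟩ := exists_isSES_isSES hGFE hX
    obtain ⟨P, hP₁, hP₂⟩ := exists_isSES_isSES_of_common_quotient hK₁ (hres (j + 1))
    exact ⟨⟨K, P, hωext hP₁ hG (hW _), hP₂⟩, G, F, hG, hF, hK₁, hK₂⟩
  choose next hnext using step
  let X : ∀ j : ℕ, {X : C // ∃ E, ω E ∧ IsSES (Z (j + 1)) E X} := fun j =>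
    Nat.rec ⟨M, W 0, hW 0, hZ0 ▸ hres 0⟩ next j
  exact ⟨fun j => (X j).1, rfl, fun j => hnext j (X j)⟩
end

section
/- Let C be an abelian category and let ω be a class of objects of C closed under extensions. If 0→W→B→M→0 is a short exact sequence with W∈ω and M∈ω^∧, then B∈ω^∧ and resdim_ω(B) ≤ resdim_ω(M). -/
/-!
Given a resolution whose first step is `0 → K → W₀ → M → 0`, pull `B → M` back along `W₀ → M` to get
`E = B ×_M W₀`. Its projections are epimorphisms with the same kernels as the original maps
(`isSES_of_isPullback`), which gives short exact sequences `0 → W → E → W₀ → 0` and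
`0 → K → E → B → 0`. The first shows `E ∈ ω`, and the second turns the given resolution of `M` into a
resolution of `B` of the same length: only `W₀` is replaced, by `E`. In length `0`, `B` itself is
an extension of objects of `ω`.
-/


open CategoryTheory

universe w v u

variable {C : Type u} [Category.{v} C] [Abelian C]

/-- The base change of a short exact sequence `0 → A → B → X → 0` along `h : Y ⟶ X` is a short
exact sequence with the same kernel `A`. -/
lemma isSES_of_isPullback {A B X Y E : C} {f : A ⟶ B} {g : B ⟶ X} (zero : f ≫ g = 0)
    (hS : (ShortComplex.mk f g zero).ShortExact) {s : E ⟶ Y} {t : E ⟶ B} {h : Y ⟶ X}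
    (sq : IsPullback s t h g) : IsSES A E Y := by
  have hf : Mono f := hS.mono_f
  have hg : Epi g := hS.epi_g
  have hk : sq.lift 0 f (by simp [zero]) ≫ s = 0 := by simp
  have hkt : sq.lift 0 f (by simp [zero]) ≫ t = f := by simp
  refine ⟨sq.lift 0 f (by simp [zero]), s, hk, ?_⟩
  have hm : Mono (sq.lift 0 f (by simp [zero])) := by
    have : Mono (sq.lift 0 f (by simp [zero]) ≫ t) := by rw [hkt]; exact hf
    exact mono_of_mono _ t
  have he : Epi s := by
    rw [← sq.isoPullback_hom_fst]
    infer_instance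
  refine ShortComplex.ShortExact.mk' (ShortComplex.exact_of_f_is_kernel _ ?_) hm he
  refine Limits.KernelFork.IsLimit.ofι' _ _ fun {Z} k hks => ?_
  have hks' : k ≫ s = 0 := hks
  have hktg : (k ≫ t) ≫ g = 0 := by
    rw [Category.assoc, ← sq.w, reassoc_of% hks', Limits.zero_comp]
  refine ⟨hS.exact.lift (k ≫ t) hktg, sq.hom_ext ?_ ?_⟩
  · simp [hks']
  · simpa using hS.exact.lift_f (k ≫ t) hktg

lemma isSES_of_iso_right {A B X Y : C} (h : IsSES A B X) (e : X ≅ Y) : IsSES A B Y := by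
  obtain ⟨f, g, zero, hS⟩ := h
  exact isSES_of_isPullback zero hS (s := g ≫ e.hom) (t := 𝟙 B) (h := e.inv)
    (IsPullback.of_vert_isIso ⟨by simp⟩)

lemma HasResLength.of_isSES {ω : C → Prop} (hext : ClosedUnderExtensions ω) {W B M : C} (hW : ω W)
    (hses : IsSES W B M) {n : ℕ} (hM : HasResLength ω n M) : HasResLength ω n B := by
  cases hM with
  | of_iso hW₀ e => exact .of_iso (hext (isSES_of_iso_right hses e) hW hW₀) (Iso.refl B)
  | step hW₀ h hK =>
    obtain ⟨f, g, zero, hS⟩ := hses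
    obtain ⟨i, p, zero', hS'⟩ := h
    have sq := IsPullback.of_hasPullback p g
    exact .step (hext (isSES_of_isPullback zero hS sq) hW hW₀)
      (isSES_of_isPullback zero' hS' sq.flip) hK

theorem stmt_1 (ω : C → Prop) (hext : ClosedUnderExtensions ω)
    (W B M : C) (hW : ω W) (hses : IsSES W B M) (hM : ResClass ω M) :
    ResClass ω B ∧ resDim ω B ≤ resDim ω M := by
  refine ⟨hM.imp fun n hn => hn.of_isSES hext hW hses, sInf_le_sInf ?_⟩
  rintro _ ⟨m, rfl, hm⟩
  exact ⟨m, rfl, hm.of_isSES hext hW hses⟩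
end

section
/- Let C be an abelian category with Ext groups, and let ω, S be classes of objects such that ω is closed under extensions and isomorphisms and ω∩S is an ω-projective relative generator in ω. Then ω∩S is an ω^∧-projective relative generator in ω^∧: Ext^i(F,M)=0 for all F∈ω∩S, M∈ω^∧ and i≥1, and every M∈ω^∧ fits in a short exact sequence 0→K→F→M→0 with F∈ω∩S and K∈ω^∧; moreover, if resdim_ω(M)≥1 then K can be chosen with resdim_ω(K) = resdim_ω(M) − 1. -/
/-! Two facts about short exact sequences carry the result.

* Pulling back `0 → A → B → X → 0` along `Y ⟶ X` gives `0 → A → P → Y → 0`. Hence an extension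
  `0 → W → E → K → 0` of an object `K` with an `ω`-resolution of length `n` by some `W ∈ ω` again has
  an `ω`-resolution of length `n`: cover `K` by `W₀ ∈ ω` with kernel `K₁`; the pullback `P` of `E`
  and `W₀` over `K` is an extension of `W₀` by `W`, so it lies in `ω`, and `P → E` is an epimorphism
  with the same kernel `K₁`.
* If `F → W` and `W → M` are epimorphisms with kernels `W₁` and `K₀`, the kernel of the composite
  `F → M` is an extension of `K₀` by `W₁`.

Given `M` with a resolution of length `n + 1` starting with `W → M`, cover `W` by `F ∈ ω ∩ S` using
the relative generator; the kernel of `F → M` then has a resolution of length `n`, and it cannot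
have a shorter one when `n + 1` is minimal for `M`. The vanishing of `Ext` follows by dimension
shifting along the resolution.
-/

open CategoryTheory

universe w v u

variable {C : Type u} [Category.{v} C] [Abelian C]

section Helpers

open Limits

lemma IsSES.pullback_left {A B X Y : C} {f : A ⟶ B} {g : B ⟶ X} {zero : f ≫ g = 0}
    (hS : (ShortComplex.mk f g zero).ShortExact) (h : Y ⟶ X) : IsSES A (pullback g h) Y := by
  have := hS.mono_f
  have := hS.epi_g
  dsimp at *
  have hw : f ≫ g = (0 : A ⟶ Y) ≫ h := by rw [zero, zero_comp]
  have hm : Mono (pullback.lift f 0 hw) := mono_of_mono_fac (pullback.lift_fst f 0 hw)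
  refine ⟨pullback.lift f 0 hw, pullback.snd g h, pullback.lift_snd f 0 hw, ?_⟩
  refine { exact := ShortComplex.exact_of_f_is_kernel _ ?_, mono_f := hm,
           epi_g := inferInstanceAs (Epi (pullback.snd g h)) }
  refine KernelFork.IsLimit.ofι' _ _ fun {T} k hk => ?_
  have hk' : k ≫ pullback.snd g h = 0 := hk
  have hk₀ : (k ≫ pullback.fst g h) ≫ g = 0 := by
    rw [Category.assoc, pullback.condition, reassoc_of% hk', zero_comp]
  refine ⟨hS.exact.lift (k ≫ pullback.fst g h) hk₀, ?_⟩
  apply pullback.hom_ext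
  · rw [Category.assoc, pullback.lift_fst]
    exact hS.exact.lift_f (k ≫ pullback.fst g h) hk₀
  · rw [Category.assoc, pullback.lift_snd, comp_zero, hk']

lemma IsSES.of_iso_mid {A B B' X : C} (h : IsSES A B X) (e : B ≅ B') : IsSES A B' X := by
  obtain ⟨f, g, zero, hS⟩ := h
  refine ⟨f ≫ e.hom, e.inv ≫ g, by simp [zero], ?_⟩
  refine ShortComplex.shortExact_of_iso (S₁ := ShortComplex.mk f g zero)
    (ShortComplex.isoMk (Iso.refl _) e (Iso.refl _) ?_ ?_) hS <;> simp

/-- The pullback of two epimorphisms with the same target is an extension in two ways. -/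
lemma IsSES.exists_pullback {A B X K W : C} (h₁ : IsSES A B X) (h₂ : IsSES K W X) :
    ∃ P : C, IsSES A P W ∧ IsSES K P B := by
  obtain ⟨f, g, zero, hS⟩ := h₁
  obtain ⟨i, p, hip, hT⟩ := h₂
  exact ⟨pullback g p, IsSES.pullback_left hS p,
    (IsSES.pullback_left hT g).of_iso_mid (pullbackSymmetry p g)⟩

/-- The kernel of a composite of epimorphisms is an extension of the two kernels. -/
lemma IsSES.exists_comp {A B X K M : C} (h₁ : IsSES A B X) (h₂ : IsSES K X M) :
    ∃ P : C, IsSES A P K ∧ IsSES P B M := by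
  obtain ⟨f, g, zero, hS⟩ := h₁
  obtain ⟨i, p, zero', hS'⟩ := h₂
  refine ⟨pullback g i, IsSES.pullback_left hS i, ?_⟩
  have := hS.epi_g
  have := hS'.mono_f
  have := hS'.epi_g
  dsimp at *
  have hc : pullback.fst g i ≫ g ≫ p = 0 := by
    rw [pullback.condition_assoc, zero', comp_zero]
  refine ⟨pullback.fst g i, g ≫ p, hc, ?_⟩
  refine { exact := ShortComplex.exact_of_f_is_kernel _ ?_,
           mono_f := inferInstanceAs (Mono (pullback.fst g i)),
           epi_g := inferInstanceAs (Epi (g ≫ p)) }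
  have : Mono (ShortComplex.mk (pullback.fst g i) (g ≫ p) hc).f := by dsimp; infer_instance
  refine KernelFork.IsLimit.ofι' _ _ fun {T} k hk => ?_
  have hk' : (k ≫ g) ≫ p = 0 := by simpa using hk
  exact ⟨pullback.lift k (hS'.exact.lift (k ≫ g) hk') (hS'.exact.lift_f (k ≫ g) hk').symm,
    pullback.lift_fst _ _ _⟩

lemma HasResLength.zero_mem {P : C → Prop} (hiso : ClosedUnderIsos P) {M : C}
    (h : HasResLength P 0 M) : P M := by
  cases h with
  | of_iso hW e => exact hiso e.symm hW

lemma HasResLength.extension {P : C → Prop} (hext : ClosedUnderExtensions P)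
    (hiso : ClosedUnderIsos P) {W E K : C} {n : ℕ} (hW : P W) (h : IsSES W E K)
    (hK : HasResLength P n K) : HasResLength P n E := by
  cases hK with
  | of_iso hV e => exact .of_iso (hext h hW (hiso e.symm hV)) (Iso.refl _)
  | step hV hs hL =>
    obtain ⟨Q, hQ₁, hQ₂⟩ := h.exists_pullback hs
    exact .step (hext hQ₁ hW hV) hQ₂ hL

/-- The first term of a resolution of positive length can be taken in `P ∩ S`. -/
lemma HasResLength.exists_cover {P S : C → Prop} (hext : ClosedUnderExtensions P)
    (hiso : ClosedUnderIsos P) (hgen : RelGenerator P S) {M : C} {n : ℕ}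
    (hM : HasResLength P (n + 1) M) :
    ∃ K F : C, (P F ∧ S F) ∧ HasResLength P n K ∧ IsSES K F M := by
  cases hM with
  | step hW h hK =>
    obtain ⟨W', F, hW', hF, hs⟩ := hgen hW
    obtain ⟨Q, hQ₁, hQ₂⟩ := hs.exists_comp h
    exact ⟨Q, F, hF, hK.extension hext hiso hW' hQ₁, hQ₂⟩

lemma HasResLength.subsingleton_ext [HasExt.{w} C] {P : C → Prop} (hiso : ClosedUnderIsos P) {F : C}
    (hF : ∀ ⦃W : C⦄, P W → ∀ i : ℕ, 1 ≤ i → Subsingleton (Abelian.Ext F W i)) {M : C} {n : ℕ}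
    (hM : HasResLength P n M) : ∀ i : ℕ, 1 ≤ i → Subsingleton (Abelian.Ext F M i) := by
  induction hM with
  | of_iso hW e => exact hF (hiso e.symm hW)
  | step hW h _ ih =>
    intro i hi
    obtain ⟨f, g, zero, hS⟩ := h
    have := ih (i + 1) (by omega)
    have := hF hW i hi
    refine subsingleton_of_forall_eq 0 fun x => ?_
    obtain ⟨y, rfl⟩ := Abelian.Ext.covariant_sequence_exact₃ F hS x rfl (Subsingleton.elim _ _)
    rw [Subsingleton.elim y 0, Abelian.Ext.zero_comp]

lemma resDim_le {P : C → Prop} {M : C} {n : ℕ} (h : HasResLength P n M) : resDim P M ≤ n :=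
  sInf_le ⟨n, rfl, h⟩

lemma ResClass.exists_resDim_eq {P : C → Prop} {M : C} (h : ResClass P M) :
    ∃ n : ℕ, resDim P M = n ∧ HasResLength P n M := by
  obtain ⟨m, hm⟩ := h
  exact csInf_mem (s := {n : ℕ∞ | ∃ m : ℕ, n = (m : ℕ∞) ∧ HasResLength P m M}) ⟨m, m, rfl, hm⟩

end Helpers

theorem stmt_2 [HasExt.{w} C] (ω S : C → Prop)
    (hext : ClosedUnderExtensions ω) (hiso : ClosedUnderIsos ω)
    (hproj : ExtVanish (fun M => ω M ∧ S M) ω)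
    (hgen : RelGenerator ω S) :
    ExtVanish (fun M => ω M ∧ S M) (ResClass ω) ∧
    (∀ M : C, ResClass ω M →
      ∃ (K F : C), (ω F ∧ S F) ∧ ResClass ω K ∧ IsSES K F M) ∧
    (∀ M : C, ResClass ω M → 1 ≤ resDim ω M →
      ∃ (K F : C), (ω F ∧ S F) ∧ IsSES K F M ∧ resDim ω K = resDim ω M - 1) := by
  refine ⟨?_, ?_, ?_⟩
  · rintro F M hF ⟨n, hM⟩
    exact hM.subsingleton_ext hiso fun W hW => hproj hF hW
  · rintro M ⟨n, hM⟩
    cases n with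
    | zero =>
      obtain ⟨W', F, hW', hF, hs⟩ := hgen (hM.zero_mem hiso)
      exact ⟨W', F, hF, ⟨0, .of_iso hW' (Iso.refl _)⟩, hs⟩
    | succ n =>
      obtain ⟨K, F, hF, hK, hs⟩ := hM.exists_cover hext hiso hgen
      exact ⟨K, F, hF, ⟨n, hK⟩, hs⟩
  · intro M hM h1
    obtain ⟨n, hn, hL⟩ := hM.exists_resDim_eq
    rw [hn] at h1 ⊢
    cases n with
    | zero => simp at h1
    | succ n =>
      obtain ⟨K, F, hF, hK, hs⟩ := hL.exists_cover hext hiso hgen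
      refine ⟨K, F, hF, hs, ?_⟩
      obtain ⟨m, hm, hKm⟩ := ResClass.exists_resDim_eq ⟨n, hK⟩
      have hle : m ≤ n := by exact_mod_cast hm ▸ resDim_le hK
      -- Splicing a resolution of `K` with `F` resolves `M`, so minimality of `n + 1` bounds `m`.
      have hge : n + 1 ≤ m + 1 := by
        exact_mod_cast hn ▸ resDim_le (HasResLength.step hF.1 hs hKm)
      obtain rfl : m = n := by omega
      rw [hm]
      norm_cast
end

section
/- Let C be an abelian category with Ext groups, and let ω, S be classes of objects such that ω is closed under extensions and isomorphisms and ω∩S is an ω-projective relative generator in ω. Then ω^∧ is closed under extensions: for every short exact sequence 0→A→B→C→0 with A,C∈ω^∧ one has B∈ω^∧. -/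
/-!
Let `0 → A → B → X → 0` be exact with `A, X ∈ ω^∧`. Two facts are needed about `ω^∧`.

* Every `M ∈ ω^∧` of length `n` is a quotient of some `F ∈ ω ∩ S` with kernel in `ω^∧` of
  length `n - 1` (`HasResLength.exists_generator`). Indeed, if `0 → K → W → M → 0` starts a
  resolution and `0 → W' → F → W → 0` comes from the relative generator, then `ker (F → M)` is an
  extension of `K` by `W' ∈ ω`, and such an extension has the same length as `K`, by pulling back
  along the first term of the resolution of `K` (`HasResLength.of_ext`).
* `Ext^i(F, M) = 0` for `F ∈ ω ∩ S`, `M ∈ ω^∧`, `i ≥ 1`, by dimension shifting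
  (`HasResLength.ext_subsingleton`).

Choose `0 → A₁ → W → A → 0` with `W ∈ ω` and `0 → X₁ → F → X → 0` with `F ∈ ω ∩ S`. Since
`Ext^1(F, A) = 0`, the map `F → X` lifts to `B`, and the horseshoe argument (`horseshoe`) gives
an epimorphism `W ⊞ F → B` whose kernel is an extension of `X₁` by `A₁`. Both lengths
drop by one, except that a length `0` stays `0`, so an induction on the maximum of the two lengths
ends with `A, X ∈ ω`, where `ω` is closed under extensions.
-/

open CategoryTheory

universe w v u

variable {C : Type u} [Category.{v} C] [Abelian C]

section Auxiliary

open Limits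

/-- A short exact sequence can be pulled back along any morphism to its third term. -/
lemma shortExact_pullback {A B X W : C} (a : A ⟶ B) (b : B ⟶ X) (zero : a ≫ b = 0)
    (h : (ShortComplex.mk a b zero).ShortExact) (w : W ⟶ X) :
    (ShortComplex.mk (pullback.lift a (0 : A ⟶ W) (by simp [zero]) : A ⟶ pullback b w)
      (pullback.snd b w) (pullback.lift_snd _ _ _)).ShortExact := by
  have : Mono a := h.mono_f
  have : Epi b := h.epi_g
  have : Mono (pullback.lift a (0 : A ⟶ W) (by simp [zero]) : A ⟶ pullback b w) :=
    mono_of_mono_fac (pullback.lift_fst _ _ _)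
  refine ShortComplex.ShortExact.mk' (ShortComplex.exact_of_f_is_kernel _
    (KernelFork.IsLimit.ofι' _ _ fun k hk => ?_)) this (by dsimp; infer_instance)
  dsimp at k hk
  have hk' : (k ≫ pullback.fst b w) ≫ b = 0 := by
    rw [Category.assoc, pullback.condition, reassoc_of% hk, zero_comp]
  refine ⟨h.exact.lift (k ≫ pullback.fst b w) hk', ?_⟩
  apply pullback.hom_ext
  · exact (Category.assoc _ _ _).trans ((congrArg _ (pullback.lift_fst _ _ _)).trans
      (h.exact.lift_f (k ≫ pullback.fst b w) hk'))
  · exact (Category.assoc _ _ _).trans ((congrArg _ (pullback.lift_snd _ _ _)).trans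
      (comp_zero.trans hk.symm))

/-- The composite of epimorphisms `P → Q → R` with kernels `K₁`, `K₂` has a kernel which is an
extension of `K₂` by `K₁`. -/
lemma IsSES.comp {K₁ K₂ P Q R : C} (h₁ : IsSES K₁ P Q) (h₂ : IsSES K₂ Q R) :
    ∃ K, IsSES K P R ∧ IsSES K₁ K K₂ := by
  obtain ⟨i, p, z₁, e₁⟩ := h₁
  obtain ⟨j, q, z₂, e₂⟩ := h₂
  have : Epi p := e₁.epi_g
  have : Epi q := e₂.epi_g
  have : Mono j := e₂.mono_f
  refine ⟨pullback p j, ⟨pullback.fst p j, p ≫ q, ?_, ?_⟩, _, _, _,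
    shortExact_pullback i p z₁ e₁ j⟩
  · rw [pullback.condition_assoc, z₂, comp_zero]
  · refine ShortComplex.ShortExact.mk' (ShortComplex.exact_of_f_is_kernel _
      (KernelFork.IsLimit.ofι' _ _ fun k hk => ?_)) (by dsimp; infer_instance)
      (by dsimp; infer_instance)
    dsimp at k hk
    have hk' : (k ≫ p) ≫ q = 0 := by rw [Category.assoc, hk]
    exact ⟨pullback.lift k (e₂.exact.lift (k ≫ p) hk') (e₂.exact.lift_f (k ≫ p) hk').symm,
      pullback.lift_fst _ _ _⟩

/-- If `0 → A → E → F → 0` is split by `s`, then an epimorphism `W → A` with kernel `A₁`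
induces an epimorphism `W ⊞ F → E` with the same kernel. -/
lemma isSES_biprod_of_section {A₁ W A E F : C} (i : A₁ ⟶ W) (p : W ⟶ A) (z₁ : i ≫ p = 0)
    (e₁ : (ShortComplex.mk i p z₁).ShortExact) (a : A ⟶ E) (b : E ⟶ F) (z : a ≫ b = 0)
    (e : (ShortComplex.mk a b z).ShortExact) (s : F ⟶ E) (hs : s ≫ b = 𝟙 F) :
    IsSES A₁ (W ⊞ F) E := by
  have : Epi p := e₁.epi_g
  have : Mono i := e₁.mono_f
  have : Mono a := e.mono_f
  have : Epi b := e.epi_g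
  refine ⟨i ≫ biprod.inl, biprod.desc (p ≫ a) s, by simp [reassoc_of% z₁], ?_⟩
  refine ShortComplex.ShortExact.mk' (ShortComplex.exact_of_f_is_kernel _
    (KernelFork.IsLimit.ofι' _ _ fun k hk => ?_)) (by dsimp; infer_instance) ?_
  · dsimp at k hk
    have hk : k ≫ biprod.fst ≫ p ≫ a + k ≫ biprod.snd ≫ s = 0 := by
      simpa [biprod.desc_eq (f := p ≫ a)] using hk
    have hF : k ≫ biprod.snd = 0 := by
      simpa [z, hs] using congr($hk ≫ b)
    have hW : (k ≫ biprod.fst) ≫ p = 0 := by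
      rw [← cancel_mono a]
      simpa [reassoc_of% hF] using hk
    refine ⟨e₁.exact.lift (k ≫ biprod.fst) hW, ?_⟩
    apply biprod.hom_ext
    · simpa using e₁.exact.lift_f (k ≫ biprod.fst) hW
    · simp [hF]
  · refine Preadditive.epi_of_cancel_zero _ fun {R} g hg => ?_
    dsimp at g hg
    have hs' : s ≫ g = 0 := by simpa using congr(biprod.inr ≫ $hg)
    have ha : a ≫ g = 0 := by
      rw [← cancel_epi p]
      simpa using congr(biprod.inl ≫ $hg)
    have hd : b ≫ e.exact.desc g ha = g := e.exact.g_desc g ha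
    have hd' : e.exact.desc g ha = 0 := by
      simpa [reassoc_of% hs, hs'] using congr(s ≫ $hd)
    rw [← hd, hd', comp_zero]

lemma isSES_biprod (A X : C) : IsSES A (A ⊞ X) X :=
  ⟨biprod.inl, biprod.snd, by simp,
    (ShortComplex.Splitting.ofHasBinaryBiproduct A X).shortExact⟩

lemma IsSES.pullback {A B X K W : C} (h : IsSES A B X) (hW : IsSES K W X) :
    ∃ E, IsSES A E W ∧ IsSES K E B := by
  obtain ⟨a, b, z, e⟩ := h
  obtain ⟨k, w, z', e'⟩ := hW
  refine ⟨Limits.pullback b w, ⟨_, _, _, shortExact_pullback a b z e w⟩, ?_⟩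
  -- The second sequence is the pullback along `b`, transported by the symmetry of pullbacks.
  have h' := shortExact_pullback k w z' e' b
  have hz : (pullback.lift k (0 : K ⟶ B) (by simp [z']) ≫ (pullbackSymmetry w b).hom) ≫
      pullback.fst b w = 0 := by
    rw [Category.assoc, pullbackSymmetry_hom_comp_fst, pullback.lift_snd]
  let φ : ShortComplex.mk (pullback.lift k (0 : K ⟶ B) (by simp [z']))
        (pullback.snd w b) (pullback.lift_snd _ _ _) ≅
      ShortComplex.mk _ _ hz :=
    ShortComplex.isoMk (Iso.refl _) (pullbackSymmetry w b) (Iso.refl _) (by simp) (by simp)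
  exact ⟨_, _, hz, ShortComplex.shortExact_of_iso φ h'⟩

variable {ω S : C → Prop}

lemma HasResLength.mem (hiso : ClosedUnderIsos ω) {M : C} (h : HasResLength ω 0 M) : ω M := by
  cases h with
  | of_iso hW e => exact hiso e.symm hW

section

variable [HasExt.{w} C]

/-- Horseshoe argument: when `Ext^1(F, A) = 0`, the map `F → X` lifts to `B`, so that presentations
of `A` and `X` combine to a presentation of `B`. -/
lemma horseshoe {A B X A₁ W X₁ F : C} (h : IsSES A B X) (hA : IsSES A₁ W A)
    (hX : IsSES X₁ F X) (hF : Subsingleton (Abelian.Ext F A 1)) :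
    ∃ K, IsSES K (W ⊞ F) B ∧ IsSES A₁ K X₁ := by
  obtain ⟨E, ⟨a, b, z, e⟩, hE⟩ := h.pullback hX
  obtain ⟨i, p, z₁, e₁⟩ := hA
  obtain ⟨s, hs⟩ := Abelian.Ext.covariant_sequence_exact₃ F e (Abelian.Ext.mk₀ (𝟙 F))
    (zero_add 1) (Subsingleton.elim _ _)
  obtain ⟨s, rfl⟩ := (Abelian.Ext.mk₀_bijective F E).2 s
  rw [Abelian.Ext.mk₀_comp_mk₀] at hs
  exact (isSES_biprod_of_section i p z₁ e₁ a b z e s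
    ((Abelian.Ext.mk₀_bijective F F).1 hs)).comp hE

lemma HasResLength.ext_subsingleton (hiso : ClosedUnderIsos ω)
    (hproj : ExtVanish (fun M => ω M ∧ S M) ω) {F : C} (hF : ω F ∧ S F) {n : ℕ} {M : C}
    (h : HasResLength ω n M) (i : ℕ) (hi : 1 ≤ i) : Subsingleton (Abelian.Ext F M i) := by
  induction h generalizing i with
  | of_iso hW e => exact hproj hF (hiso e.symm hW) i hi
  | step hW h hK ih =>
    obtain ⟨f, g, z, e⟩ := h
    have := ih (i + 1) (by lia)
    have := hproj hF hW i hi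
    refine subsingleton_of_forall_eq 0 fun x => ?_
    obtain ⟨y, rfl⟩ := Abelian.Ext.covariant_sequence_exact₃ F e x rfl (Subsingleton.elim _ _)
    rw [Subsingleton.elim y 0, Abelian.Ext.zero_comp]

end

/-- An extension of an object of length `n` by an object of `ω` has length `n`. -/
lemma HasResLength.of_ext (hext : ClosedUnderExtensions ω) (hiso : ClosedUnderIsos ω)
    {n : ℕ} {A B X : C} (hX : HasResLength ω n X) (hA : ω A) (h : IsSES A B X) :
    HasResLength ω n B := by
  cases hX with
  | of_iso hW e => exact .of_iso (hext h hA (hiso e.symm hW)) (Iso.refl _)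
  | step hW h' hK =>
    obtain ⟨E, hE, hE'⟩ := h.pullback h'
    exact .step (hext hE hA hW) hE' hK

/-- The first term of a resolution can be taken in `ω ∩ S`. The truncation `0 - 1 = 0` is intended:
an object of `ω` is a quotient of an object of `ω ∩ S` with kernel in `ω`. -/
lemma HasResLength.exists_generator (hext : ClosedUnderExtensions ω) (hiso : ClosedUnderIsos ω)
    (hgen : RelGenerator ω S) {n : ℕ} {M : C} (hM : HasResLength ω n M) :
    ∃ K F, (ω F ∧ S F) ∧ IsSES K F M ∧ HasResLength ω (n - 1) K := by
  cases hM with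
  | of_iso hW e =>
    obtain ⟨K, F, hK, hF, h⟩ := hgen (hiso e.symm hW)
    exact ⟨K, F, hF, h, .of_iso hK (Iso.refl _)⟩
  | step hW h hK =>
    obtain ⟨W', F, hW', hF, h'⟩ := hgen hW
    obtain ⟨K', hK', hext'⟩ := h'.comp h
    exact ⟨K', F, hF, hK', hK.of_ext hext hiso hW' hext'⟩

end Auxiliary

theorem stmt_3 [HasExt.{w} C] (ω S : C → Prop)
    (hext : ClosedUnderExtensions ω) (hiso : ClosedUnderIsos ω)
    (hproj : ExtVanish (fun M => ω M ∧ S M) ω)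
    (hgen : RelGenerator ω S) :
    ClosedUnderExtensions (ResClass ω) := by
  have key {n m : ℕ} {A B X : C} (hA : HasResLength ω m A) (hX : HasResLength ω n X)
      (h : IsSES A B X) (ih : ∀ {A' X' K : C}, HasResLength ω (m - 1) A' →
        HasResLength ω (n - 1) X' → IsSES A' K X' → ResClass ω K) : ResClass ω B := by
    obtain ⟨A₁, W, hW, hA₁, hA₁'⟩ := hA.exists_generator hext hiso hgen
    obtain ⟨X₁, F, hF, hX₁, hX₁'⟩ := hX.exists_generator hext hiso hgen
    obtain ⟨K, hK, hK'⟩ := horseshoe h hA₁ hX₁ (hA.ext_subsingleton hiso hproj hF 1 le_rfl)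
    obtain ⟨k, hk⟩ := ih hA₁' hX₁' hK'
    exact ⟨k + 1, .step (hext (isSES_biprod W F) hW.1 hF.1) hK hk⟩
  -- Each horseshoe lowers both lengths by one, with truncation at `0`.
  have main (N : ℕ) : ∀ {n m : ℕ} {A B X : C}, m ≤ N → n ≤ N → HasResLength ω m A →
      HasResLength ω n X → IsSES A B X → ResClass ω B := by
    induction N with
    | zero =>
      intro n m A B X hm hn hA hX h
      obtain rfl : m = 0 := by lia
      obtain rfl : n = 0 := by lia
      exact ⟨0, .of_iso (hext h (hA.mem hiso) (hX.mem hiso)) (Iso.refl _)⟩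
    | succ N ih =>
      intro n m A B X hm hn hA hX h
      exact key hA hX h (ih (by lia) (by lia))
  rintro A B X h ⟨m, hA⟩ ⟨n, hX⟩
  exact main (max m n) (le_max_left _ _) (le_max_right _ _) hA hX h
end

section
/- Let C be an abelian category with Ext groups, and let ω, S be classes of objects such that ω is closed under extensions and isomorphisms and ω∩S is an ω-projective relative generator in ω. If S is closed under cones and cocones, then ω^∧ ∩ S = (ω∩S)^∧. -/
/-!
The two inclusions are proved separately.

A finite resolution by objects of `ω ∩ S` is in particular one by objects of `ω`, and running
through it from the left shows that the resolved object lies in `S`, as `S` is closed under cones.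

Conversely let `M ∈ S` have an `ω`-resolution, starting with `0 → K → W → M → 0`. Choose
`0 → W' → F → W → 0` with `F ∈ ω ∩ S` and `W' ∈ ω`. The pullback `K'` of `F → W ← K` is the kernel
of the composite `F → M` (`isSES_comp`) and an extension of `K` by `W'`. Pulling a resolution of `K`
back along `K' → K` (`hasResLength_of_isSES`) gives an `ω`-resolution of `K'` of the same length as
that of `K`, only the term in degree `0` being replaced by an extension of it by `W'`. As `S` is
closed under cocones, `K' ∈ S`, so induction on the length of the resolution applies to `K'`.
-/

open CategoryTheory

universe w v u

variable {C : Type u} [Category.{v} C] [Abelian C]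

open Limits ZeroObject

/-- Short exact sequences are stable under pullback along any morphism `g`. -/
theorem isSES_pullback_s5 {A B X Y : C} {i : A ⟶ B} {p : B ⟶ X} (zero : i ≫ p = 0)
    (h : (ShortComplex.mk i p zero).ShortExact) (g : Y ⟶ X) :
    ∃ zero' : pullback.lift i (0 : A ⟶ Y) (by simp [zero]) ≫ pullback.snd p g = 0,
      (ShortComplex.mk (pullback.lift i (0 : A ⟶ Y) (by simp [zero]))
        (pullback.snd p g) zero').ShortExact := by
  refine ⟨pullback.lift_snd _ _ _, ?_⟩
  have hi : Mono i := h.mono_f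
  have hp : Epi p := h.epi_g
  have hm : Mono (pullback.lift (f := p) (g := g) i (0 : A ⟶ Y) (by simp [zero])) := by
    have : Mono (pullback.lift (f := p) (g := g) i (0 : A ⟶ Y) (by simp [zero]) ≫
        pullback.fst p g) := by
      rw [pullback.lift_fst]; exact hi
    exact mono_of_mono _ (pullback.fst p g)
  refine ShortComplex.ShortExact.mk' (ShortComplex.exact_of_f_is_kernel _ ?_) hm ?_
  · refine KernelFork.IsLimit.ofι' _ _ fun {T} k hk => ?_
    have hk' : k ≫ pullback.snd p g = 0 := hk
    have hz : (k ≫ pullback.fst p g) ≫ p = 0 := by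
      rw [Category.assoc, pullback.condition, ← Category.assoc, hk', zero_comp]
    refine ⟨h.exact.lift (k ≫ pullback.fst p g) hz, ?_⟩
    apply pullback.hom_ext
    · exact (Category.assoc _ _ _).trans ((congrArg _ (pullback.lift_fst _ _ _)).trans
        (h.exact.lift_f (k ≫ pullback.fst p g) hz))
    · exact (Category.assoc _ _ _).trans ((congrArg _ (pullback.lift_snd _ _ _)).trans
        (comp_zero.trans hk'.symm))
  · dsimp
    infer_instance

/-- If `F → W` and `W → M` are epimorphisms with kernels `W'` and `K`, then the kernel of `F → M`
is an extension of `K` by `W'`. -/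
theorem isSES_comp {W' F W K M : C} (h₁ : IsSES W' F W) (h₂ : IsSES K W M) :
    ∃ K' : C, IsSES W' K' K ∧ IsSES K' F M := by
  obtain ⟨i, p, hip, h₁⟩ := h₁
  obtain ⟨j, q, hjq, h₂⟩ := h₂
  obtain ⟨z, hz⟩ := isSES_pullback_s5 hip h₁ j
  have hj : Mono j := h₂.mono_f
  have hq : Epi q := h₂.epi_g
  have hp : Epi p := h₁.epi_g
  have z' : pullback.fst p j ≫ (p ≫ q) = 0 := by
    rw [← Category.assoc, pullback.condition, Category.assoc, hjq, comp_zero]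
  refine ⟨pullback p j, ⟨_, _, z, hz⟩, ⟨pullback.fst p j, p ≫ q, z', ?_⟩⟩
  have hm : Mono (pullback.fst p j) := inferInstance
  refine ShortComplex.ShortExact.mk' (ShortComplex.exact_of_f_is_kernel _ ?_) hm (epi_comp p q)
  refine KernelFork.IsLimit.ofι' _ _ fun {T} k hk => ?_
  have hk' : (k ≫ p) ≫ q = 0 := by rw [Category.assoc]; exact hk
  exact ⟨pullback.lift k (h₂.exact.lift (k ≫ p) hk') (h₂.exact.lift_f (k ≫ p) hk').symm,
    pullback.lift_fst _ _ _⟩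

theorem isSES_of_iso_of_isZero {Z X Y : C} (hZ : IsZero Z) (e : X ≅ Y) : IsSES Z X Y :=
  ⟨0, e.hom, zero_comp, ShortComplex.ShortExact.mk'
    ((ShortComplex.exact_iff_mono _ rfl).2 (inferInstanceAs (Mono e.hom)))
    ⟨fun _ _ _ => hZ.eq_of_tgt _ _⟩ (inferInstanceAs (Epi e.hom))⟩

theorem isSES_id_zero (X : C) : IsSES X X (0 : C) :=
  ⟨𝟙 X, 0, comp_zero, ShortComplex.ShortExact.mk'
    ((ShortComplex.exact_iff_epi _ rfl).2 (inferInstanceAs (Epi (𝟙 X))))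
    (inferInstanceAs (Mono (𝟙 X))) ⟨fun _ _ _ => (isZero_zero C).eq_of_src _ _⟩⟩

/-- A nonempty class closed under cones contains `0`, the cone of an identity, and hence every
object isomorphic to one of its members, as a cone of a map out of `0`. -/
theorem ClosedUnderCones.closedUnderIsos {S : C → Prop} (hS : ClosedUnderCones S) :
    ClosedUnderIsos S := fun X _ e hX =>
  hS (isSES_of_iso_of_isZero (isZero_zero C) e) (hS (isSES_id_zero X) hX hX) hX

/-- An extension of `K` by an object of `ω` has an `ω`-resolution of the same length as one of
`K`. -/
theorem hasResLength_of_isSES {ω : C → Prop} (hext : ClosedUnderExtensions ω)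
    (hiso : ClosedUnderIsos ω) {n : ℕ} {W' K' K : C} (hW' : ω W') (h : IsSES W' K' K)
    (hK : HasResLength ω n K) : HasResLength ω n K' := by
  cases hK with
  | of_iso hW e => exact .of_iso (hext h hW' (hiso e.symm hW)) (Iso.refl _)
  | @step L W _ m hW hL hLres =>
    obtain ⟨i, p, hip, h₁⟩ := h
    obtain ⟨j, q, hjq, h₂⟩ := hL
    obtain ⟨z₁, hz₁⟩ := isSES_pullback_s5 hip h₁ q
    obtain ⟨z₂, hz₂⟩ := isSES_pullback_s5 hjq h₂ p
    -- `K' ×_K W` is an extension of `W` by `W'`, and `W ×_K K'` one of `K'` by `L`.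
    have hE : ω (pullback q p) :=
      hiso (pullbackSymmetry p q) (hext ⟨_, _, z₁, hz₁⟩ hW' hW)
    exact .step hE ⟨_, _, z₂, hz₂⟩ hLres

theorem hasResLength_inter {ω S : C → Prop} (hext : ClosedUnderExtensions ω)
    (hiso : ClosedUnderIsos ω) (hgen : RelGenerator ω S) (hScone : ClosedUnderCones S)
    (hScocone : ClosedUnderCocones S) (n : ℕ) : ∀ M : C, HasResLength ω n M → S M →
      HasResLength (fun X => ω X ∧ S X) n M := by
  induction n with
  | zero =>
    intro M hM hS
    cases hM with
    | of_iso hW e => exact .of_iso ⟨hW, hScone.closedUnderIsos e hS⟩ e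
  | succ n ih =>
    intro M hM hS
    cases hM with
    | step hW h hK =>
      obtain ⟨W', F, hW', hF, hWF⟩ := hgen hW
      obtain ⟨K', h₁, h₂⟩ := isSES_comp hWF h
      exact .step hF h₂ (ih K' (hasResLength_of_isSES hext hiso hW' h₁ hK)
        (hScocone h₂ hF.2 hS))

theorem hasResLength_inter_imp {ω S : C → Prop} (hScone : ClosedUnderCones S) {n : ℕ} {M : C}
    (hM : HasResLength (fun X => ω X ∧ S X) n M) : HasResLength ω n M ∧ S M := by
  induction hM with
  | of_iso hW e => exact ⟨.of_iso hW.1 e, hScone.closedUnderIsos e.symm hW.2⟩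
  | step hW h _ ih => exact ⟨.step hW.1 h ih.1, hScone h ih.2 hW.2⟩

theorem stmt_5 [HasExt.{w} C] (ω S : C → Prop)
    (hext : ClosedUnderExtensions ω) (hiso : ClosedUnderIsos ω)
    (hproj : ExtVanish (fun M => ω M ∧ S M) ω)
    (hgen : RelGenerator ω S)
    (hScone : ClosedUnderCones S) (hScocone : ClosedUnderCocones S) :
    ∀ M : C, (ResClass ω M ∧ S M) ↔ ResClass (fun X => ω X ∧ S X) M := by
  intro M
  constructor
  · rintro ⟨⟨n, hn⟩, hS⟩
    exact ⟨n, hasResLength_inter hext hiso hgen hScone hScocone n M hn hS⟩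
  · rintro ⟨n, hn⟩
    exact ⟨⟨n, (hasResLength_inter_imp hScone hn).1⟩, (hasResLength_inter_imp hScone hn).2⟩
end
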